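/- (Guardedness theorem, preserv_Guard.) Let p be a protocol, n a nonce index and Ks a set of key indices. Assume preserv p n Ks: for every trace evs ∈ tr p, all rules R', R ∈ p and all substitutions s', s, if fresh R' s' n Ks evs, Guard n Ks (spies evs), safe Ks (spies evs) and ok evs R s, then the message of the event ap s (snd R) lies in guard n Ks. Then for every evs ∈ tr p such that fresh R' s' n Ks evs holds for some R' ∈ p and substitution s', safe Ks (spies evs) holds, and Guard n Ks (init Spy) holds, we have Guard n Ks (spies evs). -/

import Mathlib

inductive agent : Type
  | Server : agent
  | Friend : ℕ → agent
  | Spy : agent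
deriving DecidableEq

inductive msg : Type
  | Agent : agent → msg
  | Number : ℕ → msg
  | Nonce : ℕ → msg
  | Key : ℕ → msg
  | Hash : msg → msg
  | MPair : msg → msg → msg
  | Crypt : ℕ → msg → msg
deriving DecidableEq

inductive partsP (H : Set msg) : msg → Prop
  | Inj : ∀ X, X ∈ H → partsP H X
  | Fst : ∀ X Y, partsP H (msg.MPair X Y) → partsP H X
  | Snd : ∀ X Y, partsP H (msg.MPair X Y) → partsP H Y
  | Body : ∀ K X, partsP H (msg.Crypt K X) → partsP H X

/-- `parts H`: sub-components of messages of `H`. -/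
def parts (H : Set msg) : Set msg := {X | partsP H X}

inductive analzP (invKey : ℕ → ℕ) (H : Set msg) : msg → Prop
  | Inj : ∀ X, X ∈ H → analzP invKey H X
  | Fst : ∀ X Y, analzP invKey H (msg.MPair X Y) → analzP invKey H X
  | Snd : ∀ X Y, analzP invKey H (msg.MPair X Y) → analzP invKey H Y
  | Decrypt : ∀ K X, analzP invKey H (msg.Crypt K X) →
      analzP invKey H (msg.Key (invKey K)) → analzP invKey H X

/-- `analz invKey H`: what can be obtained by decomposing and decrypting messages of `H`. -/
def analz (invKey : ℕ → ℕ) (H : Set msg) : Set msg := {X | analzP invKey H X}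

inductive synthP (H : Set msg) : msg → Prop
  | Inj : ∀ X, X ∈ H → synthP H X
  | Ag : ∀ a, synthP H (msg.Agent a)
  | Num : ∀ n, synthP H (msg.Number n)
  | Hsh : ∀ X, synthP H X → synthP H (msg.Hash X)
  | Pr : ∀ X Y, synthP H X → synthP H Y → synthP H (msg.MPair X Y)
  | Cry : ∀ K X, synthP H X → msg.Key K ∈ H → synthP H (msg.Crypt K X)

/-- `synth H`: messages that can be synthesized from `H`. -/
def synth (H : Set msg) : Set msg := {X | synthP H X}

inductive guardP (invKey : ℕ → ℕ) (n : ℕ) (Ks : Set ℕ) : msg → Prop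
  | No_Nonce : ∀ X, msg.Nonce n ∉ parts {X} → guardP invKey n Ks X
  | Guard : ∀ K X, invKey K ∈ Ks → guardP invKey n Ks (msg.Crypt K X)
  | Cry : ∀ K X, guardP invKey n Ks X → guardP invKey n Ks (msg.Crypt K X)
  | Pr : ∀ X Y, guardP invKey n Ks X → guardP invKey n Ks Y →
      guardP invKey n Ks (msg.MPair X Y)

/-- `guard n Ks`: messages in which `Nonce n` is guarded by the keys of `Ks`. -/
def guardMsg (invKey : ℕ → ℕ) (n : ℕ) (Ks : Set ℕ) : Set msg := {X | guardP invKey n Ks X}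

/-- `Guard n Ks H`: every message of `H` lies in `guard n Ks`. -/
def Guard (invKey : ℕ → ℕ) (n : ℕ) (Ks : Set ℕ) (H : Set msg) : Prop :=
  ∀ X ∈ H, X ∈ guardMsg invKey n Ks
inductive event : Type
  | Says : agent → agent → msg → event
deriving DecidableEq

def msgOf : event → msg
  | event.Says _ _ X => X

/-- Set of messages sent in a trace. -/
def sent (evs : List event) : Set msg :=
  {X | ∃ A B, event.Says A B X ∈ evs}
/-- Agent patterns: an agent variable or an agent constant. -/
inductive apat : Type
  | AVar : ℕ → apat
  | ACst : agent → apat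

/-- Nonce patterns: a nonce variable or a nonce constant. -/
inductive npat : Type
  | NVar : ℕ → npat
  | NCst : ℕ → npat

/-- Key patterns: a key variable or a key constant. -/
inductive kpat : Type
  | KVar : ℕ → kpat
  | KCst : ℕ → kpat

/-- Message patterns: messages built over typed variables
(agent, nonce, key and message variables). -/
inductive mpat : Type
  | MAgent : apat → mpat
  | MNumber : ℕ → mpat
  | MNonce : npat → mpat
  | MKey : kpat → mpat
  | MHash : mpat → mpat
  | MPair : mpat → mpat → mpat
  | MCrypt : kpat → mpat → mpat
  | MVar : ℕ → mpat

/-- Event patterns. -/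
inductive epat : Type
  | SaysP : apat → apat → mpat → epat

/-- A substitution associates an agent to each agent variable, a nonce to each
nonce variable, a key to each key variable and a message to each message variable. -/
structure subst : Type where
  agentS : ℕ → agent
  nonceS : ℕ → ℕ
  keyS : ℕ → ℕ
  msgS : ℕ → msg

def apa (s : subst) : apat → agent
  | apat.AVar v => s.agentS v
  | apat.ACst a => a

def apn (s : subst) : npat → ℕ
  | npat.NVar v => s.nonceS v
  | npat.NCst n => n

def apk (s : subst) : kpat → ℕ
  | kpat.KVar v => s.keyS v
  | kpat.KCst k => k

/-- `apm s X`: the instance of a message pattern `X` by a substitution `s`. -/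
def apm (s : subst) : mpat → msg
  | mpat.MAgent a => msg.Agent (apa s a)
  | mpat.MNumber n => msg.Number n
  | mpat.MNonce p => msg.Nonce (apn s p)
  | mpat.MKey p => msg.Key (apk s p)
  | mpat.MHash X => msg.Hash (apm s X)
  | mpat.MPair X Y => msg.MPair (apm s X) (apm s Y)
  | mpat.MCrypt K X => msg.Crypt (apk s K) (apm s X)
  | mpat.MVar v => s.msgS v

/-- `ap s ev`: the instance of an event pattern `ev` by a substitution `s`. -/
def ap (s : subst) : epat → event
  | epat.SaysP a b X => event.Says (apa s a) (apa s b) (apm s X)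

/-- The nonce variables occurring in a message pattern. -/
def mNonceVars : mpat → Set ℕ
  | mpat.MNonce (npat.NVar v) => {v}
  | mpat.MHash X => mNonceVars X
  | mpat.MPair X Y => mNonceVars X ∪ mNonceVars Y
  | mpat.MCrypt _ X => mNonceVars X
  | _ => ∅

/-- The nonce variables occurring in an event pattern. -/
def eNonceVars : epat → Set ℕ
  | epat.SaysP _ _ X => mNonceVars X

/-- A rule is a pair of a set of event patterns (the preconditions)
and an event pattern (the conclusion). -/
abbrev rule : Type := Set epat × epat

/-- A protocol is a set of rules. -/
abbrev proto : Type := Set rule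

/-- `newn R`: the nonce variables occurring in the conclusion of `R`
and in no precondition. -/
def newn (R : rule) : Set ℕ :=
  {m | m ∈ eNonceVars R.2 ∧ ∀ x ∈ R.1, m ∉ eNonceVars x}

/-- `spies init evs`: the spy's initial knowledge together with all messages
sent in `evs`. -/
def spies (init : agent → Set msg) (evs : List event) : Set msg :=
  init agent.Spy ∪ sent evs

/-- `used init evs`: the parts of all agents' initial knowledge and of all
messages sent in `evs`. -/
def used (init : agent → Set msg) (evs : List event) : Set msg :=
  parts ((⋃ A, init A) ∪ sent evs)

/-- `ok evs R s`: the `s`-instance of every precondition of `R` occurs in `evs`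
and the `s`-instance of every new nonce of `R` has not been used yet. -/
def ok (init : agent → Set msg) (evs : List event) (R : rule) (s : subst) : Prop :=
  (∀ x ∈ R.1, ap s x ∈ evs) ∧
  (∀ m ∈ newn R, msg.Nonce (s.nonceS m) ∉ used init evs)

/-- The traces generated by a protocol. -/
inductive tr (invKey : ℕ → ℕ) (init : agent → Set msg) (p : proto) : List event → Prop
  | Nil : tr invKey init p []
  | Fake : ∀ evs B X, tr invKey init p evs →
      X ∈ synth (analz invKey (spies init evs)) →
      tr invKey init p (event.Says agent.Spy B X :: evs)
  | Rule : ∀ evs R s, tr invKey init p evs → R ∈ p → ok init evs R s →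
      tr invKey init p (ap s R.2 :: evs)

/-- `fresh R' s' n Ks evs`: the nonce `n` is introduced in `evs` by the
`s'`-instance of rule `R'`, in which it is guarded by `Ks`: some new nonce
variable of `R'` is instantiated to `n` by `s'`, the instance of the conclusion
of `R'` occurs in `evs`, its message lies in `guard n Ks`, and `Nonce n` does
not occur in any event of `evs` preceding that event. -/
def fresh (invKey : ℕ → ℕ) (R' : rule) (s' : subst) (n : ℕ) (Ks : Set ℕ)
    (evs : List event) : Prop :=
  (∃ m ∈ newn R', s'.nonceS m = n) ∧
  (∃ evs1 evs2 : List event, evs = evs1 ++ ap s' R'.2 :: evs2 ∧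
    msgOf (ap s' R'.2) ∈ guardMsg invKey n Ks ∧
    ∀ ev ∈ evs2, msg.Nonce n ∉ parts {msgOf ev})

/-- `safe Ks H`: no key of `Ks` can be obtained by analyzing `H`. -/
def safe (invKey : ℕ → ℕ) (Ks : Set ℕ) (H : Set msg) : Prop :=
  ∀ K ∈ Ks, msg.Key K ∉ analz invKey H

/-- `preserv p n Ks`: every rule of the protocol preserves the guardedness of
`n` w.r.t. `Ks` as long as the keys of `Ks` are safe. -/
def preserv (invKey : ℕ → ℕ) (init : agent → Set msg) (p : proto) (n : ℕ)
    (Ks : Set ℕ) : Prop :=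
  ∀ (evs : List event) (R' : rule) (s' : subst) (R : rule) (s : subst),
    tr invKey init p evs → R' ∈ p → R ∈ p →
    fresh invKey R' s' n Ks evs →
    Guard invKey n Ks (spies init evs) →
    safe invKey Ks (spies init evs) →
    ok init evs R s →
    msgOf (ap s R.2) ∈ guardMsg invKey n Ks

theorem pg_parts_mono {G H : Set msg} (h : ∀ X ∈ G, partsP H X) {Y : msg}
    (hY : partsP G Y) : partsP H Y := by
  induction hY with
  | Inj X hX => exact h X hX
  | Fst X Y _ ih => exact partsP.Fst X Y ih
  | Snd X Y _ ih => exact partsP.Snd X Y ih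
  | Body K X _ ih => exact partsP.Body K X ih

theorem pg_analz_mono {invKey : ℕ → ℕ} {G H : Set msg} (h : G ⊆ H) {Y : msg}
    (hY : analzP invKey G Y) : analzP invKey H Y := by
  induction hY with
  | Inj X hX => exact analzP.Inj X (h hX)
  | Fst X Y _ ih => exact analzP.Fst X Y ih
  | Snd X Y _ ih => exact analzP.Snd X Y ih
  | Decrypt K X _ _ ih1 ih2 => exact analzP.Decrypt K X ih1 ih2

theorem pg_parts_atom {Z Y : msg} (h1 : ∀ A B, Z ≠ msg.MPair A B)
    (h2 : ∀ K A, Z ≠ msg.Crypt K A) (hY : partsP {Z} Y) : Y = Z := by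
  induction hY with
  | Inj X hX => exact hX
  | Fst X Y _ ih => exact absurd ih.symm (h1 X Y)
  | Snd X Y _ ih => exact absurd ih.symm (h1 X Y)
  | Body K X _ ih => exact absurd ih.symm (h2 K X)

theorem pg_guard_atom {invKey : ℕ → ℕ} {n : ℕ} {Ks : Set ℕ} {Z : msg}
    (h1 : ∀ A B, Z ≠ msg.MPair A B)
    (h2 : ∀ K A, Z ≠ msg.Crypt K A) (h3 : msg.Nonce n ≠ Z) : guardP invKey n Ks Z :=
  guardP.No_Nonce Z (fun h => h3 (pg_parts_atom h1 h2 h))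

theorem pg_guard_pair {invKey : ℕ → ℕ} {n : ℕ} {Ks : Set ℕ} {X Y : msg}
    (h : guardP invKey n Ks (msg.MPair X Y)) :
    guardP invKey n Ks X ∧ guardP invKey n Ks Y := by
  cases h with
  | No_Nonce _ h =>
    constructor
    · refine guardP.No_Nonce _ (fun hn => h (pg_parts_mono ?_ hn))
      rintro Z rfl
      exact partsP.Fst _ Y (partsP.Inj _ rfl)
    · refine guardP.No_Nonce _ (fun hn => h (pg_parts_mono ?_ hn))
      rintro Z rfl
      exact partsP.Snd X _ (partsP.Inj _ rfl)
  | Pr _ _ h1 h2 => exact ⟨h1, h2⟩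

theorem pg_guard_analz {invKey : ℕ → ℕ} {n : ℕ} {Ks : Set ℕ} {H : Set msg}
    (hG : Guard invKey n Ks H) (hs : safe invKey Ks H) {X : msg}
    (hX : analzP invKey H X) : guardP invKey n Ks X := by
  induction hX with
  | Inj X hX => exact hG X hX
  | Fst X Y _ ih => exact (pg_guard_pair ih).1
  | Snd X Y _ ih => exact (pg_guard_pair ih).2
  | Decrypt K X _ hk ih _ =>
    cases ih with
    | No_Nonce _ h =>
      refine guardP.No_Nonce _ (fun hn => h (pg_parts_mono ?_ hn))
      rintro Z rfl
      exact partsP.Body K _ (partsP.Inj _ rfl)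
    | Guard _ _ h => exact absurd hk (hs _ h)
    | Cry _ _ h => exact h

theorem pg_guard_synth {invKey : ℕ → ℕ} {n : ℕ} {Ks : Set ℕ} {H : Set msg}
    (hG : ∀ X ∈ H, guardP invKey n Ks X) {X : msg}
    (hX : synthP H X) : guardP invKey n Ks X := by
  induction hX with
  | Inj X hX => exact hG X hX
  | Ag a => exact pg_guard_atom (by simp) (by simp) (by simp)
  | Num a => exact pg_guard_atom (by simp) (by simp) (by simp)
  | Hsh X _ _ => exact pg_guard_atom (by simp) (by simp) (by simp)
  | Pr X Y _ _ h1 h2 => exact guardP.Pr X Y h1 h2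
  | Cry K X _ _ h => exact guardP.Cry K X h

theorem pg_spies_cons {init : agent → Set msg} {ev : event} {evs : List event} :
    spies init evs ⊆ spies init (ev :: evs) := by
  rintro X (h | ⟨A, B, h⟩)
  · exact Or.inl h
  · exact Or.inr ⟨A, B, List.mem_cons_of_mem _ h⟩

theorem pg_safe_cons {invKey : ℕ → ℕ} {Ks : Set ℕ} {init : agent → Set msg} {ev : event}
    {evs : List event} (h : safe invKey Ks (spies init (ev :: evs))) :
    safe invKey Ks (spies init evs) :=
  fun K hK hk => h K hK (pg_analz_mono pg_spies_cons hk)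

theorem pg_Guard_cons {invKey : ℕ → ℕ} {n : ℕ} {Ks : Set ℕ} {init : agent → Set msg}
    {ev : event} {evs : List event} (h : Guard invKey n Ks (spies init evs))
    (he : msgOf ev ∈ guardMsg invKey n Ks) :
    Guard invKey n Ks (spies init (ev :: evs)) := by
  rintro X (hX | ⟨A, B, hX⟩)
  · exact h X (Or.inl hX)
  · rcases List.mem_cons.1 hX with rfl | hX
    · exact he
    · exact h X (Or.inr ⟨A, B, hX⟩)

theorem pg_fresh_cons {invKey : ℕ → ℕ} {n : ℕ} {Ks : Set ℕ} {init : agent → Set msg}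
    {R' : rule} {s' : subst} {ev : event} {evs : List event}
    (hinit : Guard invKey n Ks (init agent.Spy))
    (h : fresh invKey R' s' n Ks (ev :: evs)) :
    Guard invKey n Ks (spies init (ev :: evs)) ∨ fresh invKey R' s' n Ks evs := by
  obtain ⟨hm, evs1, evs2, he, hg, hn⟩ := h
  cases evs1 with
  | nil =>
    left
    simp only [List.nil_append, List.cons.injEq] at he
    obtain ⟨rfl, rfl⟩ := he
    refine pg_Guard_cons ?_ hg
    rintro X (hX | ⟨A, B, hX⟩)
    · exact hinit X hX
    · exact guardP.No_Nonce X (hn _ hX)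
  | cons e l =>
    right
    simp only [List.cons_append, List.cons.injEq] at he
    exact ⟨hm, l, evs2, he.2, hg, hn⟩

/-- Guardedness theorem (`preserv_Guard`): if all the rules of the protocol
preserve the guardedness of `n` w.r.t. `Ks`, `n` was introduced guarded by
`Ks`, the keys of `Ks` are safe and `n` is guarded in the spy's initial
knowledge, then `n` is guarded in all traffic. -/
theorem preserv_Guard
    (invKey : ℕ → ℕ) (init : agent → Set msg) (p : proto) (n : ℕ) (Ks : Set ℕ)
    (hinv : ∀ K, invKey (invKey K) = K)
    (hpres : preserv invKey init p n Ks)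
    (evs : List event) (hevs : tr invKey init p evs)
    (hfresh : ∃ R' ∈ p, ∃ s' : subst, fresh invKey R' s' n Ks evs)
    (hsafe : safe invKey Ks (spies init evs))
    (hinit : Guard invKey n Ks (init agent.Spy)) :
    Guard invKey n Ks (spies init evs) := by
  induction hevs with
  | Nil =>
    obtain ⟨R', _, s', _, evs1, evs2, he, _⟩ := hfresh
    simp at he
  | Fake evs B X ht hX ih =>
    obtain ⟨R', hR', s', hf⟩ := hfresh
    rcases pg_fresh_cons (init := init) hinit hf with h | h
    · exact h
    · have hs := pg_safe_cons hsafe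
      have hG := ih ⟨R', hR', s', h⟩ hs
      exact pg_Guard_cons hG (pg_guard_synth (fun _ hY => pg_guard_analz hG hs hY) hX)
  | Rule evs R s ht hR hok ih =>
    obtain ⟨R', hR', s', hf⟩ := hfresh
    rcases pg_fresh_cons (init := init) hinit hf with h | h
    · exact h
    · have hs := pg_safe_cons hsafe
      have hG := ih ⟨R', hR', s', h⟩ hs
      exact pg_Guard_cons hG (hpres evs R' s' R s ht hR' hR h hG hs hok)
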